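/- arXiv:1601.07979 — 2 statements merged into one kernel-verified Lean document; each statement's English description precedes it below -/
import Mathlib

section
/- Let (A, α_A) be a finite-dimensional Hom-bialgebra over a field k. Then A*^cop, i.e. the dual space A* with structure map ᾱ(f) = f∘α_A^{-1}, counit ε̄(f) = f(1_A), comultiplication Δ̄(f) = f_[1]⊗f_[2] determined by f_[1](x) f_[2](y) = f(α_A^{-2}(yx)), together with the convolution product (f∗f')(y) = f(α_A^{-2}(y₁)) f'(α_A^{-2}(y₂)) and unit element ε_A, is a Hom-bialgebra over k. -/
open TensorProduct BigOperators

noncomputable section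

variable (k : Type*) [Field k]

section HomDefs

variable {A B C H U X Y Z : Type*}
variable [AddCommGroup A] [Module k A] [AddCommGroup B] [Module k B]
variable [AddCommGroup C] [Module k C] [AddCommGroup H] [Module k H]
variable [AddCommGroup U] [Module k U] [AddCommGroup X] [Module k X]
variable [AddCommGroup Y] [Module k Y] [AddCommGroup Z] [Module k Z]

/-- A Hom-algebra `(A, α, μ, e)` over `k`. -/
def IsHomAlgebra (α : A ≃ₗ[k] A) (μ : A →ₗ[k] A →ₗ[k] A) (e : A) : Prop :=
  (∀ a b, α (μ a b) = μ (α a) (α b)) ∧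
  (∀ a b c, μ (α a) (μ b c) = μ (μ a b) (α c)) ∧
  α e = e ∧ (∀ a, μ e a = α a) ∧ (∀ a, μ a e = α a)

/-- A Hom-coalgebra `(C, α, Δ, ε)` over `k`. -/
def IsHomCoalgebra (α : C ≃ₗ[k] C) (Δ : C →ₗ[k] C ⊗[k] C) (ε : C →ₗ[k] k) : Prop :=
  (∀ c, Δ (α c) = TensorProduct.map α.toLinearMap α.toLinearMap (Δ c)) ∧
  (∀ c, ε (α c) = ε c) ∧
  (∀ c, TensorProduct.map α.toLinearMap Δ (Δ c)
      = TensorProduct.assoc k C C C (TensorProduct.map Δ α.toLinearMap (Δ c))) ∧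
  (∀ c, TensorProduct.lid k C (TensorProduct.map ε (LinearMap.id : C →ₗ[k] C) (Δ c)) = α c) ∧
  (∀ c, TensorProduct.rid k C (TensorProduct.map (LinearMap.id : C →ₗ[k] C) ε (Δ c)) = α c)

/-- A Hom-bialgebra `(H, α, μ, e, Δ, ε)` over `k`. -/
def IsHomBialgebra (α : H ≃ₗ[k] H) (μ : H →ₗ[k] H →ₗ[k] H) (e : H)
    (Δ : H →ₗ[k] H ⊗[k] H) (ε : H →ₗ[k] k) : Prop :=
  IsHomAlgebra k α μ e ∧ IsHomCoalgebra k α Δ ε ∧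
  (∀ a b, Δ (μ a b) = TensorProduct.map (TensorProduct.lift μ) (TensorProduct.lift μ)
      (TensorProduct.tensorTensorTensorComm k H H H H (Δ a ⊗ₜ[k] Δ b))) ∧
  Δ e = e ⊗ₜ[k] e ∧
  (∀ a b, ε (μ a b) = ε a * ε b) ∧
  ε e = 1

/-- A right `A`-Hom-module `(U, αU, act)`. -/
def IsHomModule (αA : A ≃ₗ[k] A) (μ : A →ₗ[k] A →ₗ[k] A) (e : A)
    (αU : U ≃ₗ[k] U) (act : U →ₗ[k] A →ₗ[k] U) : Prop :=
  (∀ u a, αU (act u a) = act (αU u) (αA a)) ∧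
  (∀ u, act u e = αU u) ∧
  (∀ u a b, act (act u a) (αA b) = act (αU u) (μ a b))

/-- A right `H`-Hom-comodule `(U, αU, ρ)`. -/
def IsHomComodule (αH : H ≃ₗ[k] H) (Δ : H →ₗ[k] H ⊗[k] H) (ε : H →ₗ[k] k)
    (αU : U ≃ₗ[k] U) (ρ : U →ₗ[k] U ⊗[k] H) : Prop :=
  (∀ u, ρ (αU u) = TensorProduct.map αU.toLinearMap αH.toLinearMap (ρ u)) ∧
  (∀ u, TensorProduct.map αU.toLinearMap Δ (ρ u)
      = TensorProduct.assoc k U H H (TensorProduct.map ρ αH.toLinearMap (ρ u))) ∧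
  (∀ u, TensorProduct.rid k U (TensorProduct.map (LinearMap.id : U →ₗ[k] U) ε (ρ u)) = αU u)

/-- A Hom-cotwistor `φ : B ⊗ H → H ⊗ B` between Hom-coalgebras `B` and `H`
(conditions (M1)-(M4) together with compatibility with the structure maps). -/
def IsHomCotwistor (αB : B ≃ₗ[k] B) (ΔB : B →ₗ[k] B ⊗[k] B) (εB : B →ₗ[k] k)
    (αH : H ≃ₗ[k] H) (ΔH : H →ₗ[k] H ⊗[k] H) (εH : H →ₗ[k] k)
    (φ : B ⊗[k] H →ₗ[k] H ⊗[k] B) : Prop :=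
  (φ ∘ₗ TensorProduct.map αB.toLinearMap αH.toLinearMap
     = TensorProduct.map αH.toLinearMap αB.toLinearMap ∘ₗ φ) ∧
  -- (M1)
  (TensorProduct.map αH.toLinearMap ΔB ∘ₗ φ
     = (TensorProduct.assoc k H B B).toLinearMap
       ∘ₗ TensorProduct.map φ (LinearMap.id : B →ₗ[k] B)
       ∘ₗ (TensorProduct.assoc k B H B).symm.toLinearMap
       ∘ₗ TensorProduct.map (LinearMap.id : B →ₗ[k] B) φ
       ∘ₗ (TensorProduct.assoc k B B H).toLinearMap
       ∘ₗ TensorProduct.map ΔB αH.toLinearMap) ∧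
  -- (M2)
  (TensorProduct.map ΔH αB.toLinearMap ∘ₗ φ
     = (TensorProduct.assoc k H H B).symm.toLinearMap
       ∘ₗ TensorProduct.map (LinearMap.id : H →ₗ[k] H) φ
       ∘ₗ (TensorProduct.assoc k H B H).toLinearMap
       ∘ₗ TensorProduct.map φ (LinearMap.id : H →ₗ[k] H)
       ∘ₗ (TensorProduct.assoc k B H H).symm.toLinearMap
       ∘ₗ TensorProduct.map αB.toLinearMap ΔH) ∧
  -- (M3)
  ((TensorProduct.lid k B).toLinearMap
      ∘ₗ TensorProduct.map εH (LinearMap.id : B →ₗ[k] B) ∘ₗ φ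
     = (TensorProduct.rid k B).toLinearMap
        ∘ₗ TensorProduct.map (LinearMap.id : B →ₗ[k] B) εH) ∧
  -- (M4)
  ((TensorProduct.rid k H).toLinearMap
      ∘ₗ TensorProduct.map (LinearMap.id : H →ₗ[k] H) εB ∘ₗ φ
     = (TensorProduct.lid k H).toLinearMap
        ∘ₗ TensorProduct.map εB (LinearMap.id : H →ₗ[k] H))

/-- A monoidal Hom-cotwistor between Hom-bialgebras `B` and `H`:
a Hom-cotwistor additionally satisfying (M5) and (M6). -/
def IsMonoidalHomCotwistor (αB : B ≃ₗ[k] B) (μB : B →ₗ[k] B →ₗ[k] B) (eB : B)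
    (ΔB : B →ₗ[k] B ⊗[k] B) (εB : B →ₗ[k] k)
    (αH : H ≃ₗ[k] H) (μH : H →ₗ[k] H →ₗ[k] H) (eH : H)
    (ΔH : H →ₗ[k] H ⊗[k] H) (εH : H →ₗ[k] k)
    (φ : B ⊗[k] H →ₗ[k] H ⊗[k] B) : Prop :=
  IsHomCotwistor k αB ΔB εB αH ΔH εH φ ∧
  -- (M5)
  (TensorProduct.map (TensorProduct.lift μH) (TensorProduct.lift μB)
      ∘ₗ (TensorProduct.tensorTensorTensorComm k H B H B).toLinearMap
      ∘ₗ TensorProduct.map φ φ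
    = φ ∘ₗ TensorProduct.map (TensorProduct.lift μB) (TensorProduct.lift μH)
        ∘ₗ (TensorProduct.tensorTensorTensorComm k B H B H).toLinearMap) ∧
  -- (M6)
  φ (eB ⊗ₜ[k] eH) = eH ⊗ₜ[k] eB

/-- A Hom-entwining map `Φ : H ⊗ A → A ⊗ H` (conditions (E1)-(E4) together
with compatibility with the structure maps); `(H, A, Φ)` is then a
Hom-entwining structure. -/
def IsHomEntwining (αA : A ≃ₗ[k] A) (μ : A →ₗ[k] A →ₗ[k] A) (e : A)
    (αH : H ≃ₗ[k] H) (Δ : H →ₗ[k] H ⊗[k] H) (ε : H →ₗ[k] k)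
    (Φ : H ⊗[k] A →ₗ[k] A ⊗[k] H) : Prop :=
  (TensorProduct.map αA.toLinearMap αH.toLinearMap ∘ₗ Φ
     = Φ ∘ₗ TensorProduct.map αH.toLinearMap αA.toLinearMap) ∧
  -- (E1)
  (TensorProduct.map (TensorProduct.lift μ) αH.toLinearMap
      ∘ₗ (TensorProduct.assoc k A A H).symm.toLinearMap
      ∘ₗ TensorProduct.map (LinearMap.id : A →ₗ[k] A) Φ
      ∘ₗ (TensorProduct.assoc k A H A).toLinearMap
      ∘ₗ TensorProduct.map Φ (LinearMap.id : A →ₗ[k] A)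
    = Φ ∘ₗ TensorProduct.map αH.toLinearMap (TensorProduct.lift μ)
        ∘ₗ (TensorProduct.assoc k H A A).toLinearMap) ∧
  -- (E2)
  (TensorProduct.map αA.toLinearMap Δ ∘ₗ Φ
     = (TensorProduct.assoc k A H H).toLinearMap
       ∘ₗ TensorProduct.map Φ (LinearMap.id : H →ₗ[k] H)
       ∘ₗ (TensorProduct.assoc k H A H).symm.toLinearMap
       ∘ₗ TensorProduct.map (LinearMap.id : H →ₗ[k] H) Φ
       ∘ₗ (TensorProduct.assoc k H H A).toLinearMap
       ∘ₗ TensorProduct.map Δ αA.toLinearMap) ∧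
  -- (E3)
  ((TensorProduct.rid k A).toLinearMap
      ∘ₗ TensorProduct.map (LinearMap.id : A →ₗ[k] A) ε ∘ₗ Φ
     = (TensorProduct.lid k A).toLinearMap
        ∘ₗ TensorProduct.map ε (LinearMap.id : A →ₗ[k] A)) ∧
  -- (E4)
  (∀ h, Φ (h ⊗ₜ[k] e) = e ⊗ₜ[k] h)

/-- A Hom-monoidal entwining datum between Hom-bialgebras `H` (coalgebra side)
and `A` (algebra side): a Hom-entwining map additionally satisfying (E5), (E6). -/
def IsHomMonoidalEntwining (αA : A ≃ₗ[k] A) (μA : A →ₗ[k] A →ₗ[k] A) (eA : A)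
    (ΔA : A →ₗ[k] A ⊗[k] A) (εA : A →ₗ[k] k)
    (αH : H ≃ₗ[k] H) (μH : H →ₗ[k] H →ₗ[k] H) (eH : H)
    (ΔH : H →ₗ[k] H ⊗[k] H) (εH : H →ₗ[k] k)
    (Φ : H ⊗[k] A →ₗ[k] A ⊗[k] H) : Prop :=
  IsHomEntwining k αA μA eA αH ΔH εH Φ ∧
  -- (E5)
  (TensorProduct.map (LinearMap.id : A ⊗[k] A →ₗ[k] A ⊗[k] A) (TensorProduct.lift μH)
      ∘ₗ (TensorProduct.tensorTensorTensorComm k A H A H).toLinearMap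
      ∘ₗ TensorProduct.map Φ Φ
      ∘ₗ (TensorProduct.tensorTensorTensorComm k H H A A).toLinearMap
      ∘ₗ TensorProduct.map
           (TensorProduct.map (αH.toLinearMap ∘ₗ αH.toLinearMap)
             (αH.toLinearMap ∘ₗ αH.toLinearMap)) ΔA
    = TensorProduct.map ΔA (αH.toLinearMap ∘ₗ αH.toLinearMap)
        ∘ₗ Φ ∘ₗ TensorProduct.map (TensorProduct.lift μH) (LinearMap.id : A →ₗ[k] A)) ∧
  -- (E6)
  (∀ a, TensorProduct.lid k H
      (TensorProduct.map εA (LinearMap.id : H →ₗ[k] H) (Φ (eH ⊗ₜ[k] a))) = εA a • eH)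

/-- An `n`-th Hom-entwined module over a Hom-entwining structure `(H, A, Φ)`. -/
def IsHomEntwinedModule (αA : A ≃ₗ[k] A) (μ : A →ₗ[k] A →ₗ[k] A) (e : A)
    (αH : H ≃ₗ[k] H) (Δ : H →ₗ[k] H ⊗[k] H) (ε : H →ₗ[k] k)
    (Φ : H ⊗[k] A →ₗ[k] A ⊗[k] H) (n : ℤ)
    (αU : U ≃ₗ[k] U) (act : U →ₗ[k] A →ₗ[k] U) (ρ : U →ₗ[k] U ⊗[k] H) : Prop :=
  IsHomModule k αA μ e αU act ∧
  IsHomComodule k αH Δ ε αU ρ ∧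
  ∀ u a, ρ (act u a)
    = TensorProduct.map
        (TensorProduct.lift act ∘ₗ
          TensorProduct.map (LinearMap.id : U →ₗ[k] U) αA.toLinearMap)
        ((αH ^ (-n)).toLinearMap)
        ((TensorProduct.assoc k U A H).symm
          (TensorProduct.map (LinearMap.id : U →ₗ[k] U)
            (Φ ∘ₗ TensorProduct.map ((αH ^ (n + 1)).toLinearMap)
               (LinearMap.id : A →ₗ[k] A))
            (TensorProduct.assoc k U H A (ρ u ⊗ₜ[k] a))))

/-- A Hom-Long dimodule over a Hom-bialgebra `H`. -/
def IsHomLongDimodule (αH : H ≃ₗ[k] H) (μ : H →ₗ[k] H →ₗ[k] H) (e : H)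
    (Δ : H →ₗ[k] H ⊗[k] H) (ε : H →ₗ[k] k)
    (αU : U ≃ₗ[k] U) (act : U →ₗ[k] H →ₗ[k] U) (ρ : U →ₗ[k] U ⊗[k] H) : Prop :=
  IsHomModule k αH μ e αU act ∧
  IsHomComodule k αH Δ ε αU ρ ∧
  ∀ u h, ρ (act u h)
    = TensorProduct.map (TensorProduct.lift act) αH.toLinearMap
        ((TensorProduct.assoc k U H H).symm
          (TensorProduct.map (LinearMap.id : U →ₗ[k] U)
            (TensorProduct.comm k H H).toLinearMap
            (TensorProduct.assoc k U H H (ρ u ⊗ₜ[k] αH h))))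

/-- A right `H`-comodule algebra over a Hom-bialgebra `H`. -/
def IsHomComoduleAlgebra (αH : H ≃ₗ[k] H) (μH : H →ₗ[k] H →ₗ[k] H) (eH : H)
    (ΔH : H →ₗ[k] H ⊗[k] H) (εH : H →ₗ[k] k)
    (αA : A ≃ₗ[k] A) (μA : A →ₗ[k] A →ₗ[k] A) (eA : A)
    (ρA : A →ₗ[k] A ⊗[k] H) : Prop :=
  IsHomAlgebra k αA μA eA ∧
  IsHomComodule k αH ΔH εH αA ρA ∧
  (∀ a b, ρA (μA a b) = TensorProduct.map (TensorProduct.lift μA) (TensorProduct.lift μH)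
      (TensorProduct.tensorTensorTensorComm k A H A H (ρA a ⊗ₜ[k] ρA b))) ∧
  ρA eA = eA ⊗ₜ[k] eH

/-- A right `H`-module coalgebra over a Hom-bialgebra `H`. -/
def IsHomModuleCoalgebra (αH : H ≃ₗ[k] H) (μH : H →ₗ[k] H →ₗ[k] H) (eH : H)
    (ΔH : H →ₗ[k] H ⊗[k] H) (εH : H →ₗ[k] k)
    (αC : C ≃ₗ[k] C) (ΔC : C →ₗ[k] C ⊗[k] C) (εC : C →ₗ[k] k)
    (act : C →ₗ[k] H →ₗ[k] C) : Prop :=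
  IsHomCoalgebra k αC ΔC εC ∧
  IsHomModule k αH μH eH αC act ∧
  (∀ c h, ΔC (act c h) = TensorProduct.map (TensorProduct.lift act) (TensorProduct.lift act)
      (TensorProduct.tensorTensorTensorComm k C C H H (ΔC c ⊗ₜ[k] ΔH h))) ∧
  (∀ c h, εC (act c h) = εC c * εH h)

/-- A Hom-Hopf algebra `(H, α, μ, e, Δ, ε, S)` over `k`. -/
def IsHomHopf (αH : H ≃ₗ[k] H) (μ : H →ₗ[k] H →ₗ[k] H) (e : H)
    (Δ : H →ₗ[k] H ⊗[k] H) (ε : H →ₗ[k] k) (S : H →ₗ[k] H) : Prop :=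
  IsHomBialgebra k αH μ e Δ ε ∧
  (∀ h, S (αH h) = αH (S h)) ∧
  (∀ h, TensorProduct.lift μ
      (TensorProduct.map S (LinearMap.id : H →ₗ[k] H) (Δ h)) = ε h • e) ∧
  (∀ h, TensorProduct.lift μ
      (TensorProduct.map (LinearMap.id : H →ₗ[k] H) S (Δ h)) = ε h • e)

/-- A `p`-th right-right Yetter-Drinfeld module over a Hom-Hopf algebra `H`. -/
def IsYetterDrinfeld (αH : H ≃ₗ[k] H) (μ : H →ₗ[k] H →ₗ[k] H) (e : H)
    (Δ : H →ₗ[k] H ⊗[k] H) (ε : H →ₗ[k] k) (S : H →ₗ[k] H) (p : ℤ)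
    (αU : U ≃ₗ[k] U) (act : U →ₗ[k] H →ₗ[k] U) (ρ : U →ₗ[k] U ⊗[k] H) : Prop :=
  IsHomModule k αH μ e αU act ∧
  IsHomComodule k αH Δ ε αU ρ ∧
  ∀ u h, ρ (act u h)
    = TensorProduct.map
        (TensorProduct.lift act ∘ₗ
          TensorProduct.map (LinearMap.id : U →ₗ[k] U) αH.symm.toLinearMap)
        (TensorProduct.lift μ ∘ₗ
          TensorProduct.map (S ∘ₗ (αH ^ (p - 2)).toLinearMap)
            (TensorProduct.lift μ ∘ₗ
              TensorProduct.map αH.symm.toLinearMap ((αH ^ (p - 4)).toLinearMap)))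
        (TensorProduct.tensorTensorTensorComm k U H H (H ⊗[k] H)
          (TensorProduct.map (LinearMap.id : U ⊗[k] H →ₗ[k] U ⊗[k] H)
            (TensorProduct.leftComm k H H H).toLinearMap
            (TensorProduct.tensorTensorTensorComm k U H H (H ⊗[k] H)
              (ρ u ⊗ₜ[k]
                TensorProduct.map (LinearMap.id : H →ₗ[k] H) Δ (Δ h)))))

/-- The smash coproduct comultiplication on `B ⊗ H` induced by
`φ : B ⊗ H → H ⊗ B`: `Δ(b ⊗ h) = (b₁ ⊗ (h₁)^φ) ⊗ ((b₂)^φ ⊗ h₂)`. -/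
def smashComul (φ : B ⊗[k] H →ₗ[k] H ⊗[k] B) (ΔB : B →ₗ[k] B ⊗[k] B)
    (ΔH : H →ₗ[k] H ⊗[k] H) : B ⊗[k] H →ₗ[k] (B ⊗[k] H) ⊗[k] (B ⊗[k] H) :=
  (TensorProduct.assoc k B H (B ⊗[k] H)).symm.toLinearMap
  ∘ₗ TensorProduct.map (LinearMap.id : B →ₗ[k] B)
       (TensorProduct.assoc k H B H).toLinearMap
  ∘ₗ TensorProduct.map (LinearMap.id : B →ₗ[k] B)
       (TensorProduct.map φ (LinearMap.id : H →ₗ[k] H))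
  ∘ₗ TensorProduct.map (LinearMap.id : B →ₗ[k] B)
       (TensorProduct.assoc k B H H).symm.toLinearMap
  ∘ₗ (TensorProduct.assoc k B B (H ⊗[k] H)).toLinearMap
  ∘ₗ TensorProduct.map ΔB ΔH

/-- The smash coproduct counit on `B ⊗ H`: `ε(b ⊗ h) = εB(b) εH(h)`. -/
def smashCounit (εB : B →ₗ[k] k) (εH : H →ₗ[k] k) : B ⊗[k] H →ₗ[k] k :=
  (TensorProduct.lid k k).toLinearMap ∘ₗ TensorProduct.map εB εH

/-- The componentwise product on `B ⊗ H`: `(a ⊗ h)(b ⊗ g) = ab ⊗ hg`. -/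
def smashMul (μB : B →ₗ[k] B →ₗ[k] B) (μH : H →ₗ[k] H →ₗ[k] H) :
    B ⊗[k] H →ₗ[k] B ⊗[k] H →ₗ[k] B ⊗[k] H :=
  (TensorProduct.mk k (B ⊗[k] H) (B ⊗[k] H)).compr₂
    (TensorProduct.map (TensorProduct.lift μB) (TensorProduct.lift μH)
      ∘ₗ (TensorProduct.tensorTensorTensorComm k B H B H).toLinearMap)

/-- Threefold "componentwise comultiplication" `(C⊗C)⊗C → ((C⊗C)⊗C) ⊗ ((C⊗C)⊗C)`
obtained by applying `Δ2` to each factor and pairing the first and second legs. -/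
def convDelta3 (Δ2 : C →ₗ[k] C ⊗[k] C) :
    (C ⊗[k] C) ⊗[k] C →ₗ[k] ((C ⊗[k] C) ⊗[k] C) ⊗[k] ((C ⊗[k] C) ⊗[k] C) :=
  (TensorProduct.tensorTensorTensorComm k (C ⊗[k] C) (C ⊗[k] C) C C).toLinearMap
  ∘ₗ TensorProduct.map (TensorProduct.tensorTensorTensorComm k C C C C).toLinearMap
       (LinearMap.id : C ⊗[k] C →ₗ[k] C ⊗[k] C)
  ∘ₗ TensorProduct.map (TensorProduct.map Δ2 Δ2) Δ2

/-- The map `ξ_{X,Y}(x ⊗ y) = α_X⁻¹(x)·α_H^m(y₍₁₎) ⊗ α_Y⁻¹(y₍₀₎)` for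
Hom-Long dimodules `X`, `Y`. -/
def longXi (m : ℤ) (αH : H ≃ₗ[k] H) (αX : X ≃ₗ[k] X) (αY : Y ≃ₗ[k] Y)
    (act : X →ₗ[k] H →ₗ[k] X) (ρ : Y →ₗ[k] Y ⊗[k] H) : X ⊗[k] Y →ₗ[k] X ⊗[k] Y :=
  TensorProduct.map
      (TensorProduct.lift act ∘ₗ
        TensorProduct.map (LinearMap.id : X →ₗ[k] X) ((αH ^ m).toLinearMap))
      αY.symm.toLinearMap
    ∘ₗ (TensorProduct.assoc k X H Y).symm.toLinearMap
    ∘ₗ TensorProduct.map (LinearMap.id : X →ₗ[k] X) (TensorProduct.comm k Y H).toLinearMap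
    ∘ₗ TensorProduct.map αX.symm.toLinearMap ρ

/-- The associativity constraint `a_{X,Y,Z}((x⊗y)⊗z) = α_X^{i+1}(x) ⊗ (y ⊗ α_Z^{-j-1}(z))`. -/
def homAssoc (i j : ℤ) (αX : X ≃ₗ[k] X) (αZ : Z ≃ₗ[k] Z) :
    (X ⊗[k] Y) ⊗[k] Z ≃ₗ[k] X ⊗[k] (Y ⊗[k] Z) :=
  (TensorProduct.assoc k X Y Z).trans
    (TensorProduct.congr (αX ^ (i + 1))
      (TensorProduct.congr (LinearEquiv.refl k Y) (αZ ^ (-j - 1))))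

/-- The braiding `τ_{X,Y}(x ⊗ y) = α_Y^{j-i-1}(y₍₀₎) ⊗ α_X^{i-j-1}(x)·α_H^{-p}(y₍₁₎)`
for Yetter-Drinfeld modules. -/
def ydTau (p i j : ℤ) (αH : H ≃ₗ[k] H) (αX : X ≃ₗ[k] X) (αY : Y ≃ₗ[k] Y)
    (act : X →ₗ[k] H →ₗ[k] X) (ρ : Y →ₗ[k] Y ⊗[k] H) : X ⊗[k] Y →ₗ[k] Y ⊗[k] X :=
  TensorProduct.map ((αY ^ (j - i - 1)).toLinearMap)
      (TensorProduct.lift act ∘ₗ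
        TensorProduct.map ((αX ^ (i - j - 1)).toLinearMap) ((αH ^ (-p)).toLinearMap))
    ∘ₗ (TensorProduct.leftComm k X Y H).toLinearMap
    ∘ₗ TensorProduct.map (LinearMap.id : X →ₗ[k] X) ρ

end HomDefs
theorem dd_injective {A B : Type*} [AddCommGroup A] [Module k A] [FiniteDimensional k A]
    [AddCommGroup B] [Module k B] [FiniteDimensional k B] :
    Function.Injective (TensorProduct.dualDistrib k A B) :=
  (TensorProduct.dualDistribEquiv k A B).injective

theorem dd_ext {A : Type*} [AddCommGroup A] [Module k A] [FiniteDimensional k A]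
    (s t : Module.Dual k A ⊗[k] Module.Dual k A)
    (h : ∀ x y, TensorProduct.dualDistrib k A A s (x ⊗ₜ[k] y)
      = TensorProduct.dualDistrib k A A t (x ⊗ₜ[k] y)) : s = t := by
  apply dd_injective k
  exact TensorProduct.ext' h

theorem dd_ext3 {A : Type*} [AddCommGroup A] [Module k A] [FiniteDimensional k A]
    (s t : Module.Dual k A ⊗[k] (Module.Dual k A ⊗[k] Module.Dual k A))
    (h : ∀ x y z, TensorProduct.dualDistrib k A (A ⊗[k] A)
        (TensorProduct.map LinearMap.id (TensorProduct.dualDistrib k A A) s)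
          (x ⊗ₜ[k] (y ⊗ₜ[k] z))
      = TensorProduct.dualDistrib k A (A ⊗[k] A)
        (TensorProduct.map LinearMap.id (TensorProduct.dualDistrib k A A) t)
          (x ⊗ₜ[k] (y ⊗ₜ[k] z))) : s = t := by
  have hi : Function.Injective (TensorProduct.map
      (LinearMap.id : Module.Dual k A →ₗ[k] Module.Dual k A)
      (TensorProduct.dualDistrib k A A)) :=
    (TensorProduct.congr (LinearEquiv.refl k (Module.Dual k A))
      (TensorProduct.dualDistribEquiv k A A)).injective
  apply hi
  apply dd_injective k
  apply TensorProduct.ext'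
  intro x w
  induction w using TensorProduct.induction_on with
  | zero => simp
  | tmul y z => exact h x y z
  | add a b ha hb => rw [TensorProduct.tmul_add, map_add, map_add, ha, hb]

theorem dd_map {A : Type*} [AddCommGroup A] [Module k A] (P Q : A →ₗ[k] A)
    (f g : Module.Dual k A) (X : A ⊗[k] A) :
    TensorProduct.dualDistrib k A A (f ⊗ₜ[k] g) (TensorProduct.map P Q X)
      = TensorProduct.dualDistrib k A A ((f ∘ₗ P) ⊗ₜ[k] (g ∘ₗ Q)) X := by
  induction X using TensorProduct.induction_on with
  | zero => simp
  | tmul y z => simp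
  | add a b ha hb => rw [map_add, map_add, map_add, ha, hb]

/-- the dual of a finite-dimensional Hom-bialgebra, with the
convolution product and the `cop`-comultiplication, is a Hom-bialgebra
(`A*^cop`). -/
theorem dual_of_homBialgebra_isHomBialgebra
    {A : Type*} [AddCommGroup A] [Module k A] [FiniteDimensional k A]
    (αA : A ≃ₗ[k] A) (μ : A →ₗ[k] A →ₗ[k] A) (e : A)
    (Δ : A →ₗ[k] A ⊗[k] A) (ε : A →ₗ[k] k)
    (hA : IsHomBialgebra k αA μ e Δ ε)
    (Δbar : Module.Dual k A →ₗ[k] Module.Dual k A ⊗[k] Module.Dual k A)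
    (hΔbar : ∀ (f : Module.Dual k A) (x y : A),
        TensorProduct.dualDistrib k A A (Δbar f) (x ⊗ₜ[k] y)
          = f (αA.symm (αA.symm (μ y x))))
    (star : Module.Dual k A →ₗ[k] Module.Dual k A →ₗ[k] Module.Dual k A)
    (hstar : ∀ (f f' : Module.Dual k A) (y : A),
        star f f' y = TensorProduct.dualDistrib k A A
          ((f ∘ₗ (αA.symm.toLinearMap ∘ₗ αA.symm.toLinearMap)) ⊗ₜ[k]
            (f' ∘ₗ (αA.symm.toLinearMap ∘ₗ αA.symm.toLinearMap))) (Δ y)) :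
    IsHomBialgebra k αA.symm.dualMap star (ε : Module.Dual k A) Δbar
      (Module.Dual.eval k A e) := by
  obtain ⟨⟨hm, has, he, hl, hr⟩, ⟨hΔ, hε, hco, hcl, hcr⟩, hΔμ, hΔe, hεμ, hεe⟩ := hA
  have hΔs : ∀ c, Δ (αA.symm c)
      = TensorProduct.map αA.symm.toLinearMap αA.symm.toLinearMap (Δ c) := by
    intro c
    have h := hΔ (αA.symm c)
    rw [αA.apply_symm_apply] at h
    rw [h, ← LinearMap.comp_apply, ← TensorProduct.map_comp]
    simp
  have hms : ∀ a b, αA.symm (μ a b) = μ (αA.symm a) (αA.symm b) := by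
    intro a b
    rw [LinearEquiv.symm_apply_eq, hm]; simp
  have hes : αA.symm e = e := by rw [LinearEquiv.symm_apply_eq, he]
  have hεs : ∀ c, ε (αA.symm c) = ε c := by
    intro c; rw [← hε (αA.symm c)]; simp
  refine ⟨⟨?_, ?_, ?_, ?_, ?_⟩, ⟨?_, ?_, ?_, ?_, ?_⟩, ?_, ?_, ?_, ?_⟩
  · intro f g
    ext y
    simp only [LinearEquiv.dualMap_apply, hstar, hΔs, dd_map]
    rfl
  · intro f g h
    ext y
    rw [hstar, hstar]
    have key : ∀ X : A ⊗[k] A, TensorProduct.dualDistrib k A A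
        (((αA.symm.dualMap f) ∘ₗ (αA.symm.toLinearMap ∘ₗ αA.symm.toLinearMap)) ⊗ₜ[k]
          ((star g h) ∘ₗ (αA.symm.toLinearMap ∘ₗ αA.symm.toLinearMap))) X
        = TensorProduct.dualDistrib k A (A ⊗[k] A)
          ((f ∘ₗ (αA.symm.toLinearMap ∘ₗ αA.symm.toLinearMap ∘ₗ αA.symm.toLinearMap ∘ₗ αA.symm.toLinearMap)) ⊗ₜ[k]
            TensorProduct.dualDistrib k A A
              ((g ∘ₗ (αA.symm.toLinearMap ∘ₗ αA.symm.toLinearMap ∘ₗ αA.symm.toLinearMap ∘ₗ αA.symm.toLinearMap)) ⊗ₜ[k]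
              (h ∘ₗ (αA.symm.toLinearMap ∘ₗ αA.symm.toLinearMap ∘ₗ αA.symm.toLinearMap ∘ₗ αA.symm.toLinearMap))))
          (TensorProduct.map αA.toLinearMap Δ X) := by
      intro X
      induction X using TensorProduct.induction_on with
      | zero => simp
      | tmul y z =>
        simp only [TensorProduct.dualDistrib_apply, TensorProduct.map_tmul, LinearMap.comp_apply,
          LinearEquiv.coe_coe, LinearEquiv.dualMap_apply, hstar, hΔs, dd_map,
          LinearEquiv.symm_apply_apply]
        rfl
      | add a b ha hb => rw [map_add, map_add, map_add, ha, hb]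
    have key2 : ∀ X : A ⊗[k] A, TensorProduct.dualDistrib k A A
        (((star f g) ∘ₗ (αA.symm.toLinearMap ∘ₗ αA.symm.toLinearMap)) ⊗ₜ[k]
          ((αA.symm.dualMap h) ∘ₗ (αA.symm.toLinearMap ∘ₗ αA.symm.toLinearMap))) X
        = TensorProduct.dualDistrib k A (A ⊗[k] A)
          ((f ∘ₗ (αA.symm.toLinearMap ∘ₗ αA.symm.toLinearMap ∘ₗ αA.symm.toLinearMap ∘ₗ αA.symm.toLinearMap)) ⊗ₜ[k]
            TensorProduct.dualDistrib k A A
              ((g ∘ₗ (αA.symm.toLinearMap ∘ₗ αA.symm.toLinearMap ∘ₗ αA.symm.toLinearMap ∘ₗ αA.symm.toLinearMap)) ⊗ₜ[k]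
              (h ∘ₗ (αA.symm.toLinearMap ∘ₗ αA.symm.toLinearMap ∘ₗ αA.symm.toLinearMap ∘ₗ αA.symm.toLinearMap))))
          (TensorProduct.assoc k A A A (TensorProduct.map Δ αA.toLinearMap X)) := by
      intro X
      induction X using TensorProduct.induction_on with
      | zero => simp
      | tmul y z =>
        simp only [TensorProduct.dualDistrib_apply, TensorProduct.map_tmul, LinearMap.comp_apply,
          LinearEquiv.coe_coe, LinearEquiv.dualMap_apply, hstar, hΔs, dd_map]
        generalize Δ y = Y
        induction Y using TensorProduct.induction_on with
        | zero => simp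
        | tmul u v => simp [mul_assoc]
        | add a b ha hb =>
          rw [TensorProduct.add_tmul, map_add, map_add, map_add, add_mul, ha, hb]
      | add a b ha hb => rw [map_add, map_add, map_add, map_add, ha, hb]
    rw [key, key2, hco]
  · ext c
    exact hεs c
  · intro f
    ext y
    rw [hstar]
    rw [LinearEquiv.dualMap_apply]
    have h : αA.symm y = αA.symm (αA.symm (αA y)) := by simp
    rw [h, ← hcl y]
    generalize Δ y = Y
    induction Y using TensorProduct.induction_on with
    | zero => simp
    | tmul u v => simp [hεs]
    | add a b ha hb => simp only [map_add, ha, hb]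
  · intro f
    ext y
    rw [hstar]
    rw [LinearEquiv.dualMap_apply]
    have h : αA.symm y = αA.symm (αA.symm (αA y)) := by simp
    rw [h, ← hcr y]
    generalize Δ y = Y
    induction Y using TensorProduct.induction_on with
    | zero => simp
    | tmul u v => simp [hεs, mul_comm]
    | add a b ha hb => simp only [map_add, ha, hb]
  · intro f
    apply dd_ext k
    intro x y
    have key : ∀ t : Module.Dual k A ⊗[k] Module.Dual k A,
        TensorProduct.dualDistrib k A A (TensorProduct.map αA.symm.dualMap.toLinearMap
          αA.symm.dualMap.toLinearMap t) (x ⊗ₜ[k] y)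
        = TensorProduct.dualDistrib k A A t (αA.symm x ⊗ₜ[k] αA.symm y) := by
      intro t
      induction t using TensorProduct.induction_on with
      | zero => simp
      | tmul u v => simp
      | add a b ha hb => simp only [map_add, LinearMap.add_apply, ha, hb]
    rw [key, hΔbar, hΔbar, LinearEquiv.dualMap_apply]
    simp only [hms]
  · intro f
    simp [hes]
  · intro f
    apply dd_ext3 k
    intro x y z
    have key : ∀ t : Module.Dual k A ⊗[k] Module.Dual k A,
        TensorProduct.dualDistrib k A (A ⊗[k] A)
        (TensorProduct.map LinearMap.id (TensorProduct.dualDistrib k A A)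
          (TensorProduct.map αA.symm.dualMap.toLinearMap Δbar t)) (x ⊗ₜ[k] (y ⊗ₜ[k] z))
        = TensorProduct.dualDistrib k A A t
          (αA.symm x ⊗ₜ[k] αA.symm (αA.symm (μ z y))) := by
      intro t
      induction t using TensorProduct.induction_on with
      | zero => simp
      | tmul u v => simp [hΔbar]
      | add a b ha hb => simp only [map_add, LinearMap.add_apply, ha, hb]
    have key2 : ∀ t : Module.Dual k A ⊗[k] Module.Dual k A,
        TensorProduct.dualDistrib k A (A ⊗[k] A)
        (TensorProduct.map LinearMap.id (TensorProduct.dualDistrib k A A)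
          (TensorProduct.assoc k _ _ _
            (TensorProduct.map Δbar αA.symm.dualMap.toLinearMap t))) (x ⊗ₜ[k] (y ⊗ₜ[k] z))
        = TensorProduct.dualDistrib k A A t
          (αA.symm (αA.symm (μ y x)) ⊗ₜ[k] αA.symm z) := by
      intro t
      induction t using TensorProduct.induction_on with
      | zero => simp
      | tmul u v =>
        rw [TensorProduct.map_tmul, TensorProduct.dualDistrib_apply, ← hΔbar]
        generalize Δbar u = U
        induction U using TensorProduct.induction_on with
        | zero => simp
        | tmul u v => simp [mul_assoc]
        | add a b ha hb =>
          simp only [TensorProduct.add_tmul, map_add, LinearMap.add_apply, add_mul, ha, hb]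
      | add a b ha hb => simp only [map_add, LinearMap.add_apply, ha, hb]
    rw [key, key2, hΔbar, hΔbar]
    have h := has (αA.symm z) (αA.symm y) (αA.symm x)
    have h2 := has (αA.symm (αA.symm (αA.symm z))) (αA.symm (αA.symm y)) (αA.symm (αA.symm x))
    have h3 := has (αA.symm (αA.symm z)) (αA.symm (αA.symm y)) (αA.symm (αA.symm x))
    simp only [LinearEquiv.apply_symm_apply] at h h2 h3
    simp only [hms, h3]
  · intro f
    ext y
    have key : ∀ t : Module.Dual k A ⊗[k] Module.Dual k A,
        TensorProduct.lid k (Module.Dual k A) (TensorProduct.map (Module.Dual.eval k A e)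
          LinearMap.id t) y = TensorProduct.dualDistrib k A A t (e ⊗ₜ[k] y) := by
      intro t
      induction t using TensorProduct.induction_on with
      | zero => simp
      | tmul u v => simp
      | add a b ha hb => simp only [map_add, LinearMap.add_apply, ha, hb]
    rw [key, hΔbar, hr]
    simp
  · intro f
    ext y
    have key : ∀ t : Module.Dual k A ⊗[k] Module.Dual k A,
        TensorProduct.rid k (Module.Dual k A) (TensorProduct.map LinearMap.id
          (Module.Dual.eval k A e) t) y = TensorProduct.dualDistrib k A A t (y ⊗ₜ[k] e) := by
      intro t
      induction t using TensorProduct.induction_on with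
      | zero => simp
      | tmul u v => simp [mul_comm]
      | add a b ha hb => simp only [map_add, LinearMap.add_apply, ha, hb]
    rw [key, hΔbar, hl]
    simp
  · intro f g
    apply dd_ext k
    intro x y
    have key : ∀ s t : Module.Dual k A ⊗[k] Module.Dual k A,
        TensorProduct.dualDistrib k A A
          (TensorProduct.map (TensorProduct.lift star) (TensorProduct.lift star)
            (TensorProduct.tensorTensorTensorComm k _ _ _ _ (s ⊗ₜ[k] t))) (x ⊗ₜ[k] y)
        = TensorProduct.dualDistrib k (A ⊗[k] A) (A ⊗[k] A)
            (TensorProduct.dualDistrib k A A s ⊗ₜ[k] TensorProduct.dualDistrib k A A t)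
            (TensorProduct.tensorTensorTensorComm k A A A A
              (Δ (αA.symm (αA.symm x)) ⊗ₜ[k] Δ (αA.symm (αA.symm y)))) := by
      intro s t
      induction s using TensorProduct.induction_on with
      | zero => simp
      | add a b ha hb =>
        simp only [TensorProduct.add_tmul, map_add, LinearMap.add_apply, ha, hb]
      | tmul f1 f2 =>
        induction t using TensorProduct.induction_on with
        | zero => simp
        | add a b ha hb =>
          simp only [TensorProduct.tmul_add, map_add, LinearMap.add_apply, ha, hb]
        | tmul g1 g2 =>
          simp only [TensorProduct.tensorTensorTensorComm_tmul, TensorProduct.map_tmul,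
            TensorProduct.lift.tmul, TensorProduct.dualDistrib_apply, hstar, ← dd_map,
            TensorProduct.map_comp, LinearMap.comp_apply, ← hΔs]
          generalize Δ (αA.symm (αA.symm x)) = X
          generalize Δ (αA.symm (αA.symm y)) = Y
          induction X using TensorProduct.induction_on with
          | zero => simp
          | add a b ha hb => simp only [TensorProduct.add_tmul, map_add, add_mul, ha, hb]
          | tmul x1 x2 =>
            induction Y using TensorProduct.induction_on with
            | zero => simp
            | add a b ha hb => simp only [TensorProduct.tmul_add, map_add, mul_add, ha, hb]
            | tmul y1 y2 => simp; ring
    rw [key, hΔbar, hstar]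
    simp only [hms, hΔμ, ← dd_map, TensorProduct.map_comp, LinearMap.comp_apply]
    generalize Δ (αA.symm (αA.symm x)) = X
    generalize Δ (αA.symm (αA.symm y)) = Y
    induction X using TensorProduct.induction_on with
    | zero => simp
    | add a b ha hb =>
      simp only [TensorProduct.add_tmul, TensorProduct.tmul_add, map_add, ha, hb]
    | tmul x1 x2 =>
      induction Y using TensorProduct.induction_on with
      | zero => simp
      | add a b ha hb =>
        simp only [TensorProduct.add_tmul, TensorProduct.tmul_add, map_add, ha, hb]
      | tmul y1 y2 => simp [hΔbar]
  · apply dd_ext k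
    intro x y
    rw [hΔbar]
    simp [hεs, hεμ, mul_comm]
  · intro f g
    simp [hstar, hΔe, hes]
  · simpa using hεe
end
end

section
/- Let (B, α_B) and (H, α_H) be Hom-bialgebras over a field k and let φ : B⊗H → H⊗B be a linear map with φ∘(α_B⊗α_H) = (α_H⊗α_B)∘φ, written φ(b⊗h) = Σ h^φ ⊗ b^φ. Equip B⊗H with the comultiplication Δ_{B⊗H}(b⊗h) = Σ (b₁ ⊗ (h₁)^φ) ⊗ ((b₂)^φ ⊗ h₂) (φ applied to b₂⊗h₁), counit ε_{B⊗H}(b⊗h) = ε_B(b)ε_H(h), componentwise product (a⊗h)(b⊗g) = ab ⊗ hg, unit 1_B⊗1_H, and structure map α_B⊗α_H. Then φ is a monoidal Hom-cotwistor if and only if B⊗H with these structures is a Hom-bialgebra over k. -/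
open TensorProduct BigOperators

noncomputable section

variable (k : Type*) [Field k]

section SmashHelp

/-- short name for the induction principle on tensors -/
@[elab_as_elim]
theorem tind {R M N : Type*} [CommSemiring R] [AddCommMonoid M] [AddCommMonoid N] [Module R M]
    [Module R N] {motive : M ⊗[R] N → Prop} (z : M ⊗[R] N) (zero : motive 0)
    (tmul : ∀ x y, motive (x ⊗ₜ[R] y)) (add : ∀ x y, motive x → motive y → motive (x + y)) :
    motive z := TensorProduct.induction_on z zero tmul add

variable {B H : Type*} [AddCommGroup B] [Module k B] [AddCommGroup H] [Module k H]

/-- insertion `h ⊗ b' ↦ (b ⊗ h) ⊗ (b' ⊗ h')` -/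
def smR (b : B) (h' : H) : H ⊗[k] B →ₗ[k] (B ⊗[k] H) ⊗[k] (B ⊗[k] H) :=
  map (TensorProduct.mk k B H b) ((TensorProduct.mk k B H).flip h')

@[simp] lemma smR_tmul (b b' : B) (h h' : H) :
    smR k b h' (h ⊗ₜ[k] b') = (b ⊗ₜ[k] h) ⊗ₜ[k] (b' ⊗ₜ[k] h') := by
  simp [smR]

def smS (φ : B ⊗[k] H →ₗ[k] H ⊗[k] B) :
    (B ⊗[k] B) ⊗[k] (H ⊗[k] H) →ₗ[k] (B ⊗[k] H) ⊗[k] (B ⊗[k] H) :=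
  (TensorProduct.assoc k B H (B ⊗[k] H)).symm.toLinearMap
  ∘ₗ map (LinearMap.id : B →ₗ[k] B)
       (TensorProduct.assoc k H B H).toLinearMap
  ∘ₗ map (LinearMap.id : B →ₗ[k] B)
       (map φ (LinearMap.id : H →ₗ[k] H))
  ∘ₗ map (LinearMap.id : B →ₗ[k] B)
       (TensorProduct.assoc k B H H).symm.toLinearMap
  ∘ₗ (TensorProduct.assoc k B B (H ⊗[k] H)).toLinearMap

@[simp] lemma smS_tmul (φ : B ⊗[k] H →ₗ[k] H ⊗[k] B) (b b' : B) (h h' : H) :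
    smS k φ ((b ⊗ₜ[k] b') ⊗ₜ[k] (h ⊗ₜ[k] h')) = smR k b h' (φ (b' ⊗ₜ[k] h)) := by
  simp only [smS, LinearMap.comp_apply, LinearEquiv.coe_coe, assoc_tmul,
    map_tmul, LinearMap.id_apply, assoc_symm_tmul]
  induction φ (b' ⊗ₜ[k] h) using tind with
  | zero => simp
  | tmul x y => simp
  | add x y hx hy => simp only [add_tmul, tmul_add, map_add, hx, hy]

@[simp] lemma smashComul_tmul (φ : B ⊗[k] H →ₗ[k] H ⊗[k] B) (ΔB : B →ₗ[k] B ⊗[k] B)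
    (ΔH : H →ₗ[k] H ⊗[k] H) (b : B) (h : H) :
    smashComul k φ ΔB ΔH (b ⊗ₜ[k] h) = smS k φ (ΔB b ⊗ₜ[k] ΔH h) := rfl

@[simp] lemma smashCounit_tmul (εB : B →ₗ[k] k) (εH : H →ₗ[k] k) (b : B) (h : H) :
    smashCounit k εB εH (b ⊗ₜ[k] h) = εB b * εH h := by simp [smashCounit]

@[simp] lemma smashMul_tmul (μB : B →ₗ[k] B →ₗ[k] B) (μH : H →ₗ[k] H →ₗ[k] H)
    (a b : B) (h g : H) :
    smashMul k μB μH (a ⊗ₜ[k] h) (b ⊗ₜ[k] g) = μB a b ⊗ₜ[k] μH h g := by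
  simp [smashMul]

/-- two-tensor extensionality for additive statements -/
lemma tens_ext {M N P : Type*} [AddCommGroup M] [Module k M] [AddCommGroup N] [Module k N]
    [AddCommGroup P] [Module k P] {f g : M ⊗[k] N →ₗ[k] P}
    (h : ∀ m n, f (m ⊗ₜ[k] n) = g (m ⊗ₜ[k] n)) (z : M ⊗[k] N) : f z = g z :=
  LinearMap.congr_fun (TensorProduct.ext' h) z

def smp (εB : B →ₗ[k] k) : B ⊗[k] H →ₗ[k] H :=
  (TensorProduct.lid k H).toLinearMap ∘ₗ map εB (LinearMap.id : H →ₗ[k] H)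

def smq (εH : H →ₗ[k] k) : B ⊗[k] H →ₗ[k] B :=
  (TensorProduct.rid k B).toLinearMap ∘ₗ map (LinearMap.id : B →ₗ[k] B) εH

@[simp] lemma smp_tmul (εB : B →ₗ[k] k) (b : B) (h : H) :
    smp k εB (b ⊗ₜ[k] h) = εB b • h := by simp [smp]

@[simp] lemma smq_tmul (εH : H →ₗ[k] k) (b : B) (h : H) :
    smq k εH (b ⊗ₜ[k] h) = εH h • b := by simp [smq]

def smM1 (φ : B ⊗[k] H →ₗ[k] H ⊗[k] B) : (B ⊗[k] B) ⊗[k] H →ₗ[k] H ⊗[k] (B ⊗[k] B) :=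
  (TensorProduct.assoc k H B B).toLinearMap
       ∘ₗ map φ (LinearMap.id : B →ₗ[k] B)
       ∘ₗ (TensorProduct.assoc k B H B).symm.toLinearMap
       ∘ₗ map (LinearMap.id : B →ₗ[k] B) φ
       ∘ₗ (TensorProduct.assoc k B B H).toLinearMap

def smM2 (φ : B ⊗[k] H →ₗ[k] H ⊗[k] B) : B ⊗[k] (H ⊗[k] H) →ₗ[k] (H ⊗[k] H) ⊗[k] B :=
  (TensorProduct.assoc k H H B).symm.toLinearMap
       ∘ₗ map (LinearMap.id : H →ₗ[k] H) φ
       ∘ₗ (TensorProduct.assoc k H B H).toLinearMap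
       ∘ₗ map φ (LinearMap.id : H →ₗ[k] H)
       ∘ₗ (TensorProduct.assoc k B H H).symm.toLinearMap

def smL (φ : B ⊗[k] H →ₗ[k] H ⊗[k] B) :
    (B ⊗[k] (B ⊗[k] B)) ⊗[k] (H ⊗[k] (H ⊗[k] H)) →ₗ[k]
      (B ⊗[k] H) ⊗[k] ((B ⊗[k] H) ⊗[k] (B ⊗[k] H)) :=
  map LinearMap.id (smS k φ)
  ∘ₗ (TensorProduct.assoc k B H ((B ⊗[k] B) ⊗[k] (H ⊗[k] H))).symm.toLinearMap
  ∘ₗ map LinearMap.id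
      ((TensorProduct.assoc k H (B ⊗[k] B) (H ⊗[k] H)).toLinearMap
        ∘ₗ map (smM1 k φ) LinearMap.id
        ∘ₗ (TensorProduct.assoc k (B ⊗[k] B) H (H ⊗[k] H)).symm.toLinearMap)
  ∘ₗ (TensorProduct.assoc k B (B ⊗[k] B) (H ⊗[k] (H ⊗[k] H))).toLinearMap

def smP (φ : B ⊗[k] H →ₗ[k] H ⊗[k] B) :
    ((B ⊗[k] B) ⊗[k] B) ⊗[k] ((H ⊗[k] H) ⊗[k] H) →ₗ[k]
      ((B ⊗[k] H) ⊗[k] (B ⊗[k] H)) ⊗[k] (B ⊗[k] H) :=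
  map (smS k φ) LinearMap.id
  ∘ₗ (TensorProduct.assoc k ((B ⊗[k] B) ⊗[k] (H ⊗[k] H)) B H).toLinearMap
  ∘ₗ map
      ((TensorProduct.assoc k (B ⊗[k] B) (H ⊗[k] H) B).symm.toLinearMap
        ∘ₗ map LinearMap.id (smM2 k φ)
        ∘ₗ (TensorProduct.assoc k (B ⊗[k] B) B (H ⊗[k] H)).toLinearMap) LinearMap.id
  ∘ₗ (TensorProduct.assoc k ((B ⊗[k] B) ⊗[k] B) (H ⊗[k] H) H).symm.toLinearMap

variable {k}

lemma smM1_tmul (φ : B ⊗[k] H →ₗ[k] H ⊗[k] B) (b b' : B) (h : H) :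
    smM1 k φ ((b ⊗ₜ[k] b') ⊗ₜ[k] h) =
      TensorProduct.assoc k H B B (map φ LinearMap.id
       ((TensorProduct.assoc k B H B).symm (b ⊗ₜ[k] φ (b' ⊗ₜ[k] h)))) := by
  simp [smM1]

lemma smM2_tmul (φ : B ⊗[k] H →ₗ[k] H ⊗[k] B) (b : B) (h h' : H) :
    smM2 k φ (b ⊗ₜ[k] (h ⊗ₜ[k] h')) =
      (TensorProduct.assoc k H H B).symm (map LinearMap.id φ
       (TensorProduct.assoc k H B H (φ (b ⊗ₜ[k] h) ⊗ₜ[k] h'))) := by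
  simp [smM2]

lemma smL_eq_smP (φ : B ⊗[k] H →ₗ[k] H ⊗[k] B) (x : (B ⊗[k] B) ⊗[k] B) (y : (H ⊗[k] H) ⊗[k] H) :
    smL k φ (TensorProduct.assoc k B B B x ⊗ₜ[k] TensorProduct.assoc k H H H y) =
      TensorProduct.assoc k _ _ _ (smP k φ (x ⊗ₜ[k] y)) := by
  induction x using tind with
  | zero => simp
  | add x x' hx hx' => simp only [add_tmul, map_add, hx, hx']
  | tmul x b3 =>
  induction x using tind with
  | zero => simp
  | add x x' hx hx' => simp only [add_tmul, map_add, hx, hx']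
  | tmul b1 b2 =>
  induction y using tind with
  | zero => simp
  | add x x' hx hx' => simp only [tmul_add, map_add, hx, hx']
  | tmul y h3 =>
  induction y using tind with
  | zero => simp
  | add x x' hx hx' => simp only [add_tmul, tmul_add, map_add, hx, hx']
  | tmul h1 h2 =>
  simp only [smL, smP, LinearMap.comp_apply, LinearEquiv.coe_coe, assoc_tmul,
    map_tmul, LinearMap.id_apply, assoc_symm_tmul, smM1_tmul, smM2_tmul]
  induction φ (b3 ⊗ₜ[k] h1) using tind with
  | zero => simp
  | add x x' hx hx' => simp only [add_tmul, tmul_add, map_add, hx, hx']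
  | tmul h0 b0 =>
  simp only [assoc_tmul,
    map_tmul, LinearMap.id_apply, assoc_symm_tmul]
  trans (map (TensorProduct.mk k B H b1)
      ((map LinearMap.id ((TensorProduct.mk k B H).flip h3)) ∘ₗ
        (TensorProduct.assoc k B H B).symm.toLinearMap))
      (TensorProduct.assoc k H B _ (φ (b2 ⊗ₜ[k] h0) ⊗ₜ[k] φ (b0 ⊗ₜ[k] h2)))
  · induction φ (b2 ⊗ₜ[k] h0) using tind with
    | zero => simp
    | add x x' hx hx' =>
      simp only [add_tmul, tmul_add, map_add, hx, hx']
    | tmul h4 b4 =>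
    simp only [assoc_tmul, map_tmul, LinearMap.id_apply,
      assoc_symm_tmul, smS_tmul]
    induction φ (b0 ⊗ₜ[k] h2) using tind with
    | zero => simp
    | add x x' hx hx' =>
      simp only [tmul_add, map_add, hx, hx']
    | tmul h5 b5 => simp
  · induction φ (b0 ⊗ₜ[k] h2) using tind with
    | zero => simp
    | add x x' hx hx' =>
      simp only [add_tmul, tmul_add, map_add, hx, hx']
    | tmul h5 b5 =>
    simp only [assoc_tmul, map_tmul, LinearMap.id_apply,
      assoc_symm_tmul, smS_tmul]
    induction φ (b2 ⊗ₜ[k] h0) using tind with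
    | zero => simp
    | add x x' hx hx' =>
      simp only [add_tmul, map_add, hx, hx']
    | tmul h4 b4 => simp

/-- additive induction over `x ⊗ y` -/
lemma two_ext {M N P Q R : Type*} [AddCommGroup M] [Module k M] [AddCommGroup N] [Module k N]
    [AddCommGroup P] [Module k P] [AddCommGroup Q] [Module k Q] [AddCommGroup R] [Module k R]
    (f g : (M ⊗[k] N) ⊗[k] (P ⊗[k] Q) →ₗ[k] R)
    (h : ∀ m n p q, f ((m ⊗ₜ[k] n) ⊗ₜ[k] (p ⊗ₜ[k] q)) = g ((m ⊗ₜ[k] n) ⊗ₜ[k] (p ⊗ₜ[k] q))) :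
    ∀ z, f z = g z := by
  have : f = g := ext_fourfold' h
  simp [this]

section Fwd
variable (αB : B ≃ₗ[k] B) (ΔB : B →ₗ[k] B ⊗[k] B) (εB : B →ₗ[k] k)
    (αH : H ≃ₗ[k] H) (ΔH : H →ₗ[k] H ⊗[k] H) (εH : H →ₗ[k] k)
    (φ : B ⊗[k] H →ₗ[k] H ⊗[k] B)

lemma fwd_left (h1 : ∀ z, map αH.toLinearMap ΔB (φ z)
      = smM1 k φ (map ΔB αH.toLinearMap z)) (z : (B ⊗[k] B) ⊗[k] (H ⊗[k] H)) :
    map (TensorProduct.congr αB αH).toLinearMap (smashComul k φ ΔB ΔH) (smS k φ z)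
      = smL k φ (map (map αB.toLinearMap ΔB)
          (map αH.toLinearMap ΔH) z) := by
  refine two_ext (map (TensorProduct.congr αB αH).toLinearMap
    (smashComul k φ ΔB ΔH) ∘ₗ smS k φ) (smL k φ ∘ₗ (map
      (map αB.toLinearMap ΔB) (map αH.toLinearMap ΔH))) ?_ z
  intro b b' h h'
  have e := h1 (b' ⊗ₜ[k] h)
  simp only [map_tmul, LinearEquiv.coe_coe] at e
  simp only [smL, LinearMap.comp_apply, LinearEquiv.coe_coe, assoc_tmul,
    map_tmul, LinearMap.id_apply, assoc_symm_tmul, smS_tmul, ← e]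
  induction φ (b' ⊗ₜ[k] h) using tind with
  | zero => simp
  | add x x' hx hx' => simp only [add_tmul, tmul_add, map_add, hx, hx']
  | tmul h0 b0 => simp

lemma fwd_right (h2 : ∀ z, map ΔH αB.toLinearMap (φ z)
      = smM2 k φ (map αB.toLinearMap ΔH z)) (z : (B ⊗[k] B) ⊗[k] (H ⊗[k] H)) :
    map (smashComul k φ ΔB ΔH) (TensorProduct.congr αB αH).toLinearMap (smS k φ z)
      = smP k φ (map (map ΔB αB.toLinearMap)
          (map ΔH αH.toLinearMap) z) := by
  refine two_ext (R := ((B ⊗[k] H) ⊗[k] (B ⊗[k] H)) ⊗[k] (B ⊗[k] H))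
    (map (smashComul k φ ΔB ΔH)
    (TensorProduct.congr αB αH).toLinearMap ∘ₗ smS k φ) (smP k φ ∘ₗ (map
      (map ΔB αB.toLinearMap) (map ΔH αH.toLinearMap))) ?_ z
  intro b b' h h'
  have e := h2 (b' ⊗ₜ[k] h)
  simp only [map_tmul, LinearEquiv.coe_coe] at e
  simp only [smP, LinearMap.comp_apply, LinearEquiv.coe_coe, assoc_tmul,
    map_tmul, LinearMap.id_apply, assoc_symm_tmul, smS_tmul, ← e]
  induction φ (b' ⊗ₜ[k] h) using tind with
  | zero => simp
  | add x x' hx hx' => simp only [add_tmul, tmul_add, map_add, hx, hx']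
  | tmul h0 b0 => simp

lemma fwd_coassoc (hB : IsHomCoalgebra k αB ΔB εB) (hH : IsHomCoalgebra k αH ΔH εH)
    (h1 : ∀ z, map αH.toLinearMap ΔB (φ z)
      = smM1 k φ (map ΔB αH.toLinearMap z))
    (h2 : ∀ z, map ΔH αB.toLinearMap (φ z)
      = smM2 k φ (map αB.toLinearMap ΔH z)) (z : B ⊗[k] H) :
    map (TensorProduct.congr αB αH).toLinearMap (smashComul k φ ΔB ΔH)
        (smashComul k φ ΔB ΔH z)
      = TensorProduct.assoc k _ _ _ (map (smashComul k φ ΔB ΔH)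
        (TensorProduct.congr αB αH).toLinearMap (smashComul k φ ΔB ΔH z)) := by
  induction z using tind with
  | zero => simp
  | add x x' hx hx' => simp only [map_add, hx, hx']
  | tmul b h =>
  rw [smashComul_tmul, fwd_left _ _ _ _ _ h1, fwd_right _ _ _ _ _ h2, map_tmul,
    map_tmul, hB.2.2.1, hH.2.2.1, smL_eq_smP]

lemma fwd_counit_left (h3 : ∀ z, TensorProduct.lid k B
      (map εH (LinearMap.id : B →ₗ[k] B) (φ z)) = smq k εH z)
    (z : (B ⊗[k] B) ⊗[k] (H ⊗[k] H)) :
    TensorProduct.lid k _ (map (smashCounit k εB εH) LinearMap.id (smS k φ z))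
      = map (smp k εB) (smp k εH) z := by
  refine two_ext ((TensorProduct.lid k _).toLinearMap ∘ₗ
    map (smashCounit k εB εH) LinearMap.id ∘ₗ smS k φ)
    (map (smp k εB) (smp k εH)) ?_ z
  intro b b' h h'
  have e := h3 (b' ⊗ₜ[k] h)
  rw [smq_tmul] at e
  trans εB b • ((TensorProduct.lid k B
      (map εH (LinearMap.id : B →ₗ[k] B) (φ (b' ⊗ₜ[k] h)))) ⊗ₜ[k] h')
  · simp only [LinearMap.comp_apply, LinearEquiv.coe_coe, smS_tmul]
    clear e
    induction φ (b' ⊗ₜ[k] h) using tind with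
    | zero => simp
    | add x x' hx hx' => simp only [add_tmul, smul_add, map_add, hx, hx']
    | tmul h0 b0 => simp [smul_tmul', smul_smul]
  · rw [e]
    simp [smul_tmul', tmul_smul, smul_smul, mul_comm]

lemma fwd_counit_right (h4 : ∀ z, TensorProduct.rid k H
      (map (LinearMap.id : H →ₗ[k] H) εB (φ z)) = smp k εB z)
    (z : (B ⊗[k] B) ⊗[k] (H ⊗[k] H)) :
    TensorProduct.rid k _ (map LinearMap.id (smashCounit k εB εH) (smS k φ z))
      = map (smq k εB) (smq k εH) z := by
  refine two_ext ((TensorProduct.rid k _).toLinearMap ∘ₗ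
    map LinearMap.id (smashCounit k εB εH) ∘ₗ smS k φ)
    (map (smq k εB) (smq k εH)) ?_ z
  intro b b' h h'
  have e := h4 (b' ⊗ₜ[k] h)
  rw [smp_tmul] at e
  trans εH h' • (b ⊗ₜ[k] (TensorProduct.rid k H
      (map (LinearMap.id : H →ₗ[k] H) εB (φ (b' ⊗ₜ[k] h)))))
  · simp only [LinearMap.comp_apply, LinearEquiv.coe_coe, smS_tmul]
    clear e
    induction φ (b' ⊗ₜ[k] h) using tind with
    | zero => simp
    | add x x' hx hx' => simp only [tmul_add, smul_add, map_add, hx, hx']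
    | tmul h0 b0 => simp [tmul_smul, smul_smul, mul_comm]
  · rw [e]
    simp [smul_tmul', tmul_smul, smul_smul, mul_comm]

lemma fwd_alpha (hnat : ∀ z, φ (map αB.toLinearMap αH.toLinearMap z)
          = map αH.toLinearMap αB.toLinearMap (φ z))
    (z : (B ⊗[k] B) ⊗[k] (H ⊗[k] H)) :
    smS k φ (map (map αB.toLinearMap αB.toLinearMap)
      (map αH.toLinearMap αH.toLinearMap) z) =
    map (TensorProduct.congr αB αH).toLinearMap
      (TensorProduct.congr αB αH).toLinearMap (smS k φ z) := by
  refine two_ext (smS k φ ∘ₗ (map (map αB.toLinearMap αB.toLinearMap)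
      (map αH.toLinearMap αH.toLinearMap)))
    (map (TensorProduct.congr αB αH).toLinearMap
      (TensorProduct.congr αB αH).toLinearMap ∘ₗ smS k φ) ?_ z
  intro b b' h h'
  have e := hnat (b' ⊗ₜ[k] h)
  simp only [map_tmul, LinearEquiv.coe_coe] at e
  simp only [LinearMap.comp_apply, LinearEquiv.coe_coe, smS_tmul, map_tmul, e]
  clear e
  induction φ (b' ⊗ₜ[k] h) using tind with
  | zero => simp
  | add x x' hx hx' => simp only [map_add, hx, hx']
  | tmul h0 b0 => simp

variable (μB : B →ₗ[k] B →ₗ[k] B) (μH : H →ₗ[k] H →ₗ[k] H)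

lemma fwd_mul (h5 : ∀ a b h g, map (TensorProduct.lift μH) (TensorProduct.lift μB)
      (tensorTensorTensorComm k H B H B (φ (a ⊗ₜ[k] h) ⊗ₜ[k] φ (b ⊗ₜ[k] g)))
    = φ (μB a b ⊗ₜ[k] μH h g)) (x x' : B ⊗[k] B) (y y' : H ⊗[k] H) :
    smS k φ (map (TensorProduct.lift μB) (TensorProduct.lift μB)
      (tensorTensorTensorComm k B B B B (x ⊗ₜ[k] x')) ⊗ₜ[k]
      map (TensorProduct.lift μH) (TensorProduct.lift μH)
      (tensorTensorTensorComm k H H H H (y ⊗ₜ[k] y'))) =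
    map (TensorProduct.lift (smashMul k μB μH)) (TensorProduct.lift (smashMul k μB μH))
      (tensorTensorTensorComm k _ _ _ _
        (smS k φ (x ⊗ₜ[k] y) ⊗ₜ[k] smS k φ (x' ⊗ₜ[k] y'))) := by
  induction x using tind with
  | zero => simp
  | add x x' hx hx' => simp only [add_tmul, map_add, hx, hx']
  | tmul a1 a2 =>
  induction x' using tind with
  | zero => simp
  | add x x' hx hx' => simp only [add_tmul, tmul_add, map_add, hx, hx']
  | tmul b1 b2 =>
  induction y using tind with
  | zero => simp
  | add x x' hx hx' => simp only [add_tmul, tmul_add, map_add, hx, hx']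
  | tmul h1 h2 =>
  induction y' using tind with
  | zero => simp
  | add x x' hx hx' => simp only [tmul_add, map_add, hx, hx']
  | tmul g1 g2 =>
  simp only [tensorTensorTensorComm_tmul, map_tmul,
    TensorProduct.lift.tmul, smS_tmul, ← h5]
  induction φ (a2 ⊗ₜ[k] h1) using tind with
  | zero => simp
  | add x x' hx hx' => simp only [add_tmul, map_add, hx, hx']
  | tmul h0 b0 =>
  induction φ (b2 ⊗ₜ[k] g1) using tind with
  | zero => simp
  | add x x' hx hx' => simp only [tmul_add, map_add, hx, hx']
  | tmul g0 c0 => simp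

end Fwd

section Bwd
variable (αB : B ≃ₗ[k] B) (ΔB : B →ₗ[k] B ⊗[k] B) (εB : B →ₗ[k] k)
    (αH : H ≃ₗ[k] H) (ΔH : H →ₗ[k] H ⊗[k] H) (εH : H →ₗ[k] k)
    (φ : B ⊗[k] H →ₗ[k] H ⊗[k] B)

lemma smp_eq (z : B ⊗[k] H) : smp k εB z
    = TensorProduct.lid k H (map εB LinearMap.id z) := rfl

lemma smq_eq (z : B ⊗[k] H) : smq k εH z
    = TensorProduct.rid k B (map LinearMap.id εH z) := rfl

/-- `(p ⊗ q) ∘ Δ = φ ∘ (α ⊗ α)` -/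
lemma bwd_pq (hB : IsHomCoalgebra k αB ΔB εB) (hH : IsHomCoalgebra k αH ΔH εH) (b : B) (h : H) :
    map (smp k εB) (smq k εH) (smashComul k φ ΔB ΔH (b ⊗ₜ[k] h))
      = φ (αB b ⊗ₜ[k] αH h) := by
  rw [← hB.2.2.2.1, ← hH.2.2.2.2, smashComul_tmul]
  refine two_ext (map (smp k εB) (smq k εH) ∘ₗ smS k φ)
    (φ ∘ₗ map (smp k εB) (smq k εH)) ?_ (ΔB b ⊗ₜ[k] ΔH h)
  intro b b' h h'
  simp only [LinearMap.comp_apply, smS_tmul, map_tmul, smp_tmul, smq_tmul,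
    ← smul_tmul', tmul_smul, map_smul]
  induction φ (b' ⊗ₜ[k] h) using tind with
  | zero => simp
  | add x x' hx hx' => simp only [map_add, smul_add, hx, hx']
  | tmul h0 b0 => simp [smul_tmul', tmul_smul]

/-- `(id ⊗ q) ∘ Δ` -/
lemma bwd_iq (hH : IsHomCoalgebra k αH ΔH εH) (b : B) (h : H) :
    map LinearMap.id (smq k εH) (smashComul k φ ΔB ΔH (b ⊗ₜ[k] h))
      = (TensorProduct.assoc k B H B).symm (map LinearMap.id φ
        (TensorProduct.assoc k B B H (ΔB b ⊗ₜ[k] αH h))) := by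
  rw [← hH.2.2.2.2, smashComul_tmul]
  refine two_ext (map LinearMap.id (smq k εH) ∘ₗ smS k φ)
    ((TensorProduct.assoc k B H B).symm.toLinearMap ∘ₗ map LinearMap.id φ ∘ₗ
      (TensorProduct.assoc k B B H).toLinearMap ∘ₗ
        map LinearMap.id (smq k εH)) ?_ (ΔB b ⊗ₜ[k] ΔH h)
  intro b b' h h'
  simp only [LinearMap.comp_apply, smS_tmul, map_tmul, smq_tmul, LinearMap.id_apply,
    LinearEquiv.coe_coe, assoc_tmul,
    tmul_smul, map_smul]
  induction φ (b' ⊗ₜ[k] h) using tind with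
  | zero => simp
  | add x x' hx hx' => simp only [map_add, smul_add, tmul_add, hx, hx']
  | tmul h0 b0 => simp [tmul_smul]

/-- `(p ⊗ id) ∘ Δ` -/
lemma bwd_pi (hB : IsHomCoalgebra k αB ΔB εB) (b : B) (h : H) :
    map (smp k εB) LinearMap.id (smashComul k φ ΔB ΔH (b ⊗ₜ[k] h))
      = TensorProduct.assoc k H B H (map φ LinearMap.id
        ((TensorProduct.assoc k B H H).symm (αB b ⊗ₜ[k] ΔH h))) := by
  rw [← hB.2.2.2.1, smashComul_tmul]
  refine two_ext (map (smp k εB) LinearMap.id ∘ₗ smS k φ)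
    ((TensorProduct.assoc k H B H).toLinearMap ∘ₗ map φ LinearMap.id ∘ₗ
      (TensorProduct.assoc k B H H).symm.toLinearMap ∘ₗ
        map (smp k εB) LinearMap.id) ?_ (ΔB b ⊗ₜ[k] ΔH h)
  intro b b' h h'
  simp only [LinearMap.comp_apply, smS_tmul, map_tmul, smp_tmul, LinearMap.id_apply,
    LinearEquiv.coe_coe, assoc_symm_tmul,
    ← smul_tmul', tmul_smul, map_smul]
  induction φ (b' ⊗ₜ[k] h) using tind with
  | zero => simp
  | add x x' hx hx' => simp only [map_add, smul_add, add_tmul, hx, hx']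
  | tmul h0 b0 => simp [smul_tmul']


lemma bwd_M3 (hB : IsHomCoalgebra k αB ΔB εB) (hH : IsHomCoalgebra k αH ΔH εH)
    (hc : ∀ z, TensorProduct.lid k _ (map (smashCounit k εB εH) LinearMap.id
      (smashComul k φ ΔB ΔH z)) = TensorProduct.congr αB αH z) (b : B) (h : H) :
    TensorProduct.lid k B (map εH (LinearMap.id : B →ₗ[k] B)
      (φ (αB b ⊗ₜ[k] αH h))) = smq k εH (αB b ⊗ₜ[k] αH h) := by
  have := congrArg (smq k εH) (hc (b ⊗ₜ[k] h))
  rw [congr_tmul] at this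
  rw [← this, ← bwd_pq αB ΔB εB αH ΔH εH φ hB hH]
  induction smashComul k φ ΔB ΔH (b ⊗ₜ[k] h) using tind with
  | zero => simp
  | add x x' hx hx' => simp only [map_add, hx, hx']
  | tmul x y =>
  induction x using tind with
  | zero => simp
  | add x x' hx hx' => simp only [map_add, add_tmul, hx, hx']
  | tmul x y => simp

lemma bwd_M4 (hB : IsHomCoalgebra k αB ΔB εB) (hH : IsHomCoalgebra k αH ΔH εH)
    (hc : ∀ z, TensorProduct.rid k _ (map LinearMap.id (smashCounit k εB εH)
      (smashComul k φ ΔB ΔH z)) = TensorProduct.congr αB αH z) (b : B) (h : H) :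
    TensorProduct.rid k H (map (LinearMap.id : H →ₗ[k] H) εB
      (φ (αB b ⊗ₜ[k] αH h))) = smp k εB (αB b ⊗ₜ[k] αH h) := by
  have := congrArg (smp k εB) (hc (b ⊗ₜ[k] h))
  rw [congr_tmul] at this
  rw [← this, ← bwd_pq αB ΔB εB αH ΔH εH φ hB hH]
  induction smashComul k φ ΔB ΔH (b ⊗ₜ[k] h) using tind with
  | zero => simp
  | add x x' hx hx' => simp only [map_add, hx, hx']
  | tmul x y =>
  induction y using tind with
  | zero => simp
  | add x x' hx hx' => simp only [map_add, tmul_add, hx, hx']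
  | tmul x y => simp [smul_smul, mul_comm]

/-- `(q ⊗ q) ∘ Δ = ΔB ∘ q` -/
lemma bwd_qq (hH : IsHomCoalgebra k αH ΔH εH)
    (h3 : ∀ z, TensorProduct.lid k B
      (map εH (LinearMap.id : B →ₗ[k] B) (φ z)) = smq k εH z) (z : B ⊗[k] H) :
    map (smq k εH) (smq k εH) (smashComul k φ ΔB ΔH z) = ΔB (smq k εH z) := by
  have key : ∀ z, map (smq k εH) (smq k εH) (smS k φ z)
      = smq k (εH ∘ₗ smq k εH) z := by
    refine two_ext (map (smq k εH) (smq k εH) ∘ₗ smS k φ) _ ?_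
    intro b b' h h'
    have e := h3 (b' ⊗ₜ[k] h)
    rw [smq_tmul] at e
    trans εH h' • (b ⊗ₜ[k] (TensorProduct.lid k B
      (map εH (LinearMap.id : B →ₗ[k] B) (φ (b' ⊗ₜ[k] h)))))
    · simp only [LinearMap.comp_apply, smS_tmul]
      clear e
      induction φ (b' ⊗ₜ[k] h) using tind with
      | zero => simp
      | add x x' hx hx' => simp only [map_add, smul_add, tmul_add, hx, hx']
      | tmul h0 b0 => simp [smul_tmul', tmul_smul, smul_smul, mul_comm]
    · rw [e]
      simp [tmul_smul, smul_smul]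
  induction z using tind with
  | zero => simp
  | add x x' hx hx' => simp only [map_add, hx, hx']
  | tmul b h =>
    rw [smashComul_tmul, key, smq_tmul, smq_tmul, LinearMap.comp_apply, smq_eq, hH.2.2.2.2,
      hH.2.1, map_smul]

/-- `(p ⊗ p) ∘ Δ = ΔH ∘ p` -/
lemma bwd_pp (hB : IsHomCoalgebra k αB ΔB εB)
    (h4 : ∀ z, TensorProduct.rid k H
      (map (LinearMap.id : H →ₗ[k] H) εB (φ z)) = smp k εB z) (z : B ⊗[k] H) :
    map (smp k εB) (smp k εB) (smashComul k φ ΔB ΔH z) = ΔH (smp k εB z) := by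
  have key : ∀ z, map (smp k εB) (smp k εB) (smS k φ z)
      = smp k (εB ∘ₗ smp k εB) z := by
    refine two_ext (map (smp k εB) (smp k εB) ∘ₗ smS k φ) _ ?_
    intro b b' h h'
    have e := h4 (b' ⊗ₜ[k] h)
    rw [smp_tmul] at e
    trans εB b • ((TensorProduct.rid k H
      (map (LinearMap.id : H →ₗ[k] H) εB (φ (b' ⊗ₜ[k] h)))) ⊗ₜ[k] h')
    · simp only [LinearMap.comp_apply, smS_tmul]
      clear e
      induction φ (b' ⊗ₜ[k] h) using tind with
      | zero => simp
      | add x x' hx hx' => simp only [map_add, smul_add, add_tmul, hx, hx']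
      | tmul h0 b0 => simp [smul_tmul', tmul_smul, smul_smul, mul_comm]
    · rw [e]
      simp [smul_tmul', smul_smul]
  induction z using tind with
  | zero => simp
  | add x x' hx hx' => simp only [map_add, hx, hx']
  | tmul b h =>
    rw [smashComul_tmul, key, smp_tmul, smp_tmul, LinearMap.comp_apply, smp_eq, hB.2.2.2.1,
      hB.2.1, map_smul]

lemma smp_alpha (hB : IsHomCoalgebra k αB ΔB εB) (z : B ⊗[k] H) :
    smp k εB (TensorProduct.congr αB αH z) = αH (smp k εB z) := by
  induction z using tind with
  | zero => simp
  | add x x' hx hx' => simp only [map_add, hx, hx']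
  | tmul b h => simp [hB.2.1]

lemma smq_alpha (hH : IsHomCoalgebra k αH ΔH εH) (z : B ⊗[k] H) :
    smq k εH (TensorProduct.congr αB αH z) = αB (smq k εH z) := by
  induction z using tind with
  | zero => simp
  | add x x' hx hx' => simp only [map_add, hx, hx']
  | tmul b h => simp [hH.2.1]

lemma bwd_M1 (hB : IsHomCoalgebra k αB ΔB εB) (hH : IsHomCoalgebra k αH ΔH εH)
    (hnat : ∀ z, φ (map αB.toLinearMap αH.toLinearMap z)
          = map αH.toLinearMap αB.toLinearMap (φ z))
    (h3 : ∀ z, TensorProduct.lid k B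
      (map εH (LinearMap.id : B →ₗ[k] B) (φ z)) = smq k εH z)
    (hco : ∀ z, map (TensorProduct.congr αB αH).toLinearMap (smashComul k φ ΔB ΔH)
        (smashComul k φ ΔB ΔH z)
      = TensorProduct.assoc k _ _ _ (map (smashComul k φ ΔB ΔH)
        (TensorProduct.congr αB αH).toLinearMap (smashComul k φ ΔB ΔH z))) (b : B) (h : H) :
    map αH.toLinearMap ΔB (φ (αB b ⊗ₜ[k] αH h))
      = smM1 k φ (map ΔB αH.toLinearMap (αB b ⊗ₜ[k] αH h)) := by
  have e := congrArg (map (smp k εB)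
    (map (smq k εH) (smq k εH))) (hco (b ⊗ₜ[k] h))
  have L : ∀ z, map (smp k εB) (map (smq k εH) (smq k εH))
      (map (TensorProduct.congr αB αH).toLinearMap (smashComul k φ ΔB ΔH) z)
      = map αH.toLinearMap ΔB (map (smp k εB) (smq k εH) z) := by
    intro z
    induction z using tind with
    | zero => simp
    | add x x' hx hx' => simp only [map_add, hx, hx']
    | tmul x y =>
      simp only [map_tmul, LinearEquiv.coe_coe]
      rw [smp_alpha αB ΔB εB αH hB, bwd_qq ΔB αH ΔH εH φ hH h3]
  have R : ∀ z, map (smp k εB) (map (smq k εH) (smq k εH))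
      (TensorProduct.assoc k _ _ _ (map (smashComul k φ ΔB ΔH)
        (TensorProduct.congr αB αH).toLinearMap z))
      = TensorProduct.assoc k H B B (map
        (φ ∘ₗ map αB.toLinearMap αH.toLinearMap) αB.toLinearMap
        (map LinearMap.id (smq k εH) z)) := by
    intro z
    induction z using tind with
    | zero => simp
    | add x x' hx hx' => simp only [map_add, hx, hx']
    | tmul x y =>
    induction x using tind with
    | zero => simp
    | add x x' hx hx' => simp only [map_add, add_tmul, hx, hx']
    | tmul b h =>
      rw [map_map_assoc]
      simp only [LinearMap.comp_apply, map_tmul, LinearEquiv.coe_coe,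
        LinearMap.id_apply]
      rw [smq_alpha αB αH ΔH εH hH, bwd_pq αB ΔB εB αH ΔH εH φ hB hH]
  rw [L, R, bwd_pq αB ΔB εB αH ΔH εH φ hB hH, bwd_iq ΔB αH ΔH εH φ hH] at e
  rw [e, map_tmul, hB.1]
  simp only [LinearEquiv.coe_coe]
  generalize ΔB b = x
  generalize αH h = h'
  induction x using tind with
  | zero => simp
  | add x x' hx hx' => simp only [map_add, add_tmul, hx, hx']
  | tmul b1 b2 =>
  have e2 := hnat (b2 ⊗ₜ[k] h')
  simp only [map_tmul, LinearEquiv.coe_coe] at e2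
  simp only [map_tmul, smM1_tmul, LinearEquiv.coe_coe, e2, assoc_tmul,
    LinearMap.id_apply]
  clear e2
  induction φ (b2 ⊗ₜ[k] h') using tind with
  | zero => simp
  | add x x' hx hx' => simp only [map_add, tmul_add, hx, hx']
  | tmul h0 b0 => simp

lemma bwd_M2 (hB : IsHomCoalgebra k αB ΔB εB) (hH : IsHomCoalgebra k αH ΔH εH)
    (hnat : ∀ z, φ (map αB.toLinearMap αH.toLinearMap z)
          = map αH.toLinearMap αB.toLinearMap (φ z))
    (h4 : ∀ z, TensorProduct.rid k H
      (map (LinearMap.id : H →ₗ[k] H) εB (φ z)) = smp k εB z)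
    (hco : ∀ z, map (TensorProduct.congr αB αH).toLinearMap (smashComul k φ ΔB ΔH)
        (smashComul k φ ΔB ΔH z)
      = TensorProduct.assoc k _ _ _ (map (smashComul k φ ΔB ΔH)
        (TensorProduct.congr αB αH).toLinearMap (smashComul k φ ΔB ΔH z))) (b : B) (h : H) :
    map ΔH αB.toLinearMap (φ (αB b ⊗ₜ[k] αH h))
      = smM2 k φ (map αB.toLinearMap ΔH (αB b ⊗ₜ[k] αH h)) := by
  have e := congrArg (map (map (smp k εB) (smp k εB)) (smq k εH))
    ((LinearEquiv.symm_apply_eq _).2 (hco (b ⊗ₜ[k] h)))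
  have L : ∀ z, map (map (smp k εB) (smp k εB)) (smq k εH)
      (map (smashComul k φ ΔB ΔH) (TensorProduct.congr αB αH).toLinearMap z)
      = map ΔH αB.toLinearMap (map (smp k εB) (smq k εH) z) := by
    intro z
    induction z using tind with
    | zero => simp
    | add x x' hx hx' => simp only [map_add, hx, hx']
    | tmul x y =>
      simp only [map_tmul, LinearEquiv.coe_coe]
      rw [smq_alpha αB αH ΔH εH hH, bwd_pp αB ΔB εB ΔH φ hB h4]
  have R : ∀ z, map (map (smp k εB) (smp k εB)) (smq k εH)
      ((TensorProduct.assoc k _ _ _).symm (map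
        (TensorProduct.congr αB αH).toLinearMap (smashComul k φ ΔB ΔH) z))
      = (TensorProduct.assoc k H H B).symm (map αH.toLinearMap
        (φ ∘ₗ map αB.toLinearMap αH.toLinearMap)
        (map (smp k εB) LinearMap.id z)) := by
    intro z
    induction z using tind with
    | zero => simp
    | add x x' hx hx' => simp only [map_add, hx, hx']
    | tmul x y =>
    induction y using tind with
    | zero => simp
    | add x x' hx hx' => simp only [map_add, tmul_add, hx, hx']
    | tmul b h =>
      rw [map_map_assoc_symm]
      simp only [LinearMap.comp_apply, map_tmul, LinearEquiv.coe_coe,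
        LinearMap.id_apply]
      rw [smp_alpha αB ΔB εB αH hB, bwd_pq αB ΔB εB αH ΔH εH φ hB hH]
  rw [L, R, bwd_pq αB ΔB εB αH ΔH εH φ hB hH, bwd_pi αB ΔB εB ΔH φ hB] at e
  rw [← e, map_tmul, hH.1]
  simp only [LinearEquiv.coe_coe]
  generalize ΔH h = x
  generalize αB b = b'
  induction x using tind with
  | zero => simp
  | add x x' hx hx' => simp only [map_add, tmul_add, hx, hx']
  | tmul h1 h2 =>
  have e2 := hnat (b' ⊗ₜ[k] h1)
  simp only [map_tmul, LinearEquiv.coe_coe] at e2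
  simp only [map_tmul, smM2_tmul, LinearEquiv.coe_coe, e2,
    assoc_symm_tmul, LinearMap.id_apply]
  clear e2
  induction φ (b' ⊗ₜ[k] h1) using tind with
  | zero => simp
  | add x x' hx hx' => simp only [map_add, add_tmul, hx, hx']
  | tmul h0 b0 => simp

variable (μB : B →ₗ[k] B →ₗ[k] B) (μH : H →ₗ[k] H →ₗ[k] H)

lemma bwd_mul (mB : ∀ a b, εB (μB a b) = εB a * εB b) (mH : ∀ a b, εH (μH a b) = εH a * εH b)
    (x y : (B ⊗[k] H) ⊗[k] (B ⊗[k] H)) :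
    map (smp k εB) (smq k εH)
      (map (TensorProduct.lift (smashMul k μB μH))
        (TensorProduct.lift (smashMul k μB μH))
        (tensorTensorTensorComm k _ _ _ _ (x ⊗ₜ[k] y))) =
    map (TensorProduct.lift μH) (TensorProduct.lift μB)
      (tensorTensorTensorComm k H B H B
        (map (smp k εB) (smq k εH) x ⊗ₜ[k]
          map (smp k εB) (smq k εH) y)) := by
  have hp : ∀ u v, smp k εB (smashMul k μB μH u v) = μH (smp k εB u) (smp k εB v) := by
    intro u v
    induction u using tind with
    | zero => simp
    | add x x' hx hx' => simp only [map_add, LinearMap.add_apply, hx, hx']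
    | tmul b h =>
    induction v using tind with
    | zero => simp
    | add x x' hx hx' => simp only [map_add, hx, hx']
    | tmul b' h' => simp [mB, smul_smul, mul_comm]
  have hq : ∀ u v, smq k εH (smashMul k μB μH u v) = μB (smq k εH u) (smq k εH v) := by
    intro u v
    induction u using tind with
    | zero => simp
    | add x x' hx hx' => simp only [map_add, LinearMap.add_apply, hx, hx']
    | tmul b h =>
    induction v using tind with
    | zero => simp
    | add x x' hx hx' => simp only [map_add, hx, hx']
    | tmul b' h' => simp [mH, smul_smul, mul_comm]
  induction x using tind with
  | zero => simp
  | add x x' hx hx' => simp only [map_add, add_tmul, hx, hx']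
  | tmul x x' =>
  induction y using tind with
  | zero => simp
  | add x x' hx hx' => simp only [map_add, tmul_add, hx, hx']
  | tmul y y' => simp [hp, hq]

end Bwd

end SmashHelp

/-- `φ` is a monoidal Hom-cotwistor iff the smash coproduct
`B ⊗ H` (with componentwise product) is a Hom-bialgebra. -/
theorem isMonoidalHomCotwistor_iff_smashCoproduct_isHomBialgebra
    {B H : Type*} [AddCommGroup B] [Module k B] [AddCommGroup H] [Module k H]
    (αB : B ≃ₗ[k] B) (μB : B →ₗ[k] B →ₗ[k] B) (eB : B)
    (ΔB : B →ₗ[k] B ⊗[k] B) (εB : B →ₗ[k] k)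
    (αH : H ≃ₗ[k] H) (μH : H →ₗ[k] H →ₗ[k] H) (eH : H)
    (ΔH : H →ₗ[k] H ⊗[k] H) (εH : H →ₗ[k] k)
    (hB : IsHomBialgebra k αB μB eB ΔB εB) (hH : IsHomBialgebra k αH μH eH ΔH εH)
    (φ : B ⊗[k] H →ₗ[k] H ⊗[k] B)
    (hnat : φ ∘ₗ TensorProduct.map αB.toLinearMap αH.toLinearMap
          = TensorProduct.map αH.toLinearMap αB.toLinearMap ∘ₗ φ) :
    IsMonoidalHomCotwistor k αB μB eB ΔB εB αH μH eH ΔH εH φ ↔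
      IsHomBialgebra k (TensorProduct.congr αB αH) (smashMul k μB μH)
        (eB ⊗ₜ[k] eH) (smashComul k φ ΔB ΔH) (smashCounit k εB εH) := by
  obtain ⟨aB, cB, mB, uB, emB, euB⟩ := hB
  obtain ⟨aH, cH, mH, uH, emH, euH⟩ := hH
  have hn : ∀ z, φ (map αB.toLinearMap αH.toLinearMap z)
      = map αH.toLinearMap αB.toLinearMap (φ z) :=
    fun z => LinearMap.congr_fun hnat z
  constructor
  · rintro ⟨⟨-, h1, h2, h3, h4⟩, h5, h6⟩
    replace h1 : ∀ z, map αH.toLinearMap ΔB (φ z)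
      = smM1 k φ (map ΔB αH.toLinearMap z) := fun z => LinearMap.congr_fun h1 z
    replace h2 : ∀ z, map ΔH αB.toLinearMap (φ z)
      = smM2 k φ (map αB.toLinearMap ΔH z) := fun z => LinearMap.congr_fun h2 z
    replace h3 : ∀ z, TensorProduct.lid k B
      (map εH (LinearMap.id : B →ₗ[k] B) (φ z)) = smq k εH z :=
      fun z => LinearMap.congr_fun h3 z
    replace h4 : ∀ z, TensorProduct.rid k H
      (map (LinearMap.id : H →ₗ[k] H) εB (φ z)) = smp k εB z :=
      fun z => LinearMap.congr_fun h4 z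
    replace h5 : ∀ a b h g, map (TensorProduct.lift μH) (TensorProduct.lift μB)
      (tensorTensorTensorComm k H B H B (φ (a ⊗ₜ[k] h) ⊗ₜ[k] φ (b ⊗ₜ[k] g)))
        = φ (μB a b ⊗ₜ[k] μH h g) := fun a b h g => by
      simpa using LinearMap.congr_fun h5 ((a ⊗ₜ[k] h) ⊗ₜ[k] (b ⊗ₜ[k] g))
    refine ⟨⟨?_, ?_, ?_, ?_, ?_⟩, ⟨?_, ?_, ?_, ?_, ?_⟩, ?_, ?_, ?_, ?_⟩
    · intro x y
      induction x using tind with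
      | zero => simp
      | add x x' hx hx' => simp only [map_add, LinearMap.add_apply, hx, hx']
      | tmul a h =>
      induction y using tind with
      | zero => simp
      | add x x' hx hx' => simp only [map_add, hx, hx']
      | tmul b g => simp [aB.1, aH.1]
    · intro x y z
      induction x using tind with
      | zero => simp
      | add x x' hx hx' => simp only [map_add, LinearMap.add_apply, hx, hx']
      | tmul a h =>
      induction y using tind with
      | zero => simp
      | add x x' hx hx' => simp only [map_add, LinearMap.add_apply, hx, hx']
      | tmul b g =>
      induction z using tind with
      | zero => simp
      | add x x' hx hx' => simp only [map_add, hx, hx']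
      | tmul c f => simp [aB.2.1, aH.2.1]
    · simp [aB.2.2.1, aH.2.2.1]
    · intro x
      induction x using tind with
      | zero => simp
      | add x x' hx hx' => simp only [map_add, hx, hx']
      | tmul a h => simp [aB.2.2.2.1, aH.2.2.2.1]
    · intro x
      induction x using tind with
      | zero => simp
      | add x x' hx hx' => simp only [map_add, LinearMap.add_apply, hx, hx']
      | tmul a h => simp [aB.2.2.2.2, aH.2.2.2.2]
    · intro x
      induction x using tind with
      | zero => simp
      | add x x' hx hx' => simp only [map_add, hx, hx']
      | tmul a h =>
        rw [congr_tmul, smashComul_tmul, smashComul_tmul, cB.1, cH.1,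
          ← fwd_alpha αB αH φ hn, map_tmul]
    · intro x
      induction x using tind with
      | zero => simp
      | add x x' hx hx' => simp only [map_add, hx, hx']
      | tmul a h => simp [cB.2.1, cH.2.1]
    · exact fwd_coassoc αB ΔB εB αH ΔH εH φ cB cH h1 h2
    · intro x
      induction x using tind with
      | zero => simp
      | add x x' hx hx' => simp only [map_add, hx, hx']
      | tmul a h =>
        rw [smashComul_tmul, fwd_counit_left εB εH φ h3, map_tmul, smp_eq, smp_eq,
          cB.2.2.2.1, cH.2.2.2.1, congr_tmul]
    · intro x
      induction x using tind with
      | zero => simp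
      | add x x' hx hx' => simp only [map_add, hx, hx']
      | tmul a h =>
        rw [smashComul_tmul, fwd_counit_right εB εH φ h4, map_tmul, smq_eq, smq_eq,
          cB.2.2.2.2, cH.2.2.2.2, congr_tmul]
    · intro x y
      induction x using tind with
      | zero => simp
      | add x x' hx hx' =>
        simp only [map_add, LinearMap.add_apply, add_tmul, hx, hx']
      | tmul a h =>
      induction y using tind with
      | zero => simp
      | add x x' hx hx' => simp only [map_add, tmul_add, hx, hx']
      | tmul b g =>
        rw [smashMul_tmul, smashComul_tmul, smashComul_tmul, smashComul_tmul, mB, mH,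
          fwd_mul φ μB μH h5]
    · rw [smashComul_tmul, uB, uH, smS_tmul, h6, smR_tmul]
    · intro x y
      induction x using tind with
      | zero => simp
      | add x x' hx hx' => simp only [map_add, LinearMap.add_apply, add_mul, hx, hx']
      | tmul a h =>
      induction y using tind with
      | zero => simp
      | add x x' hx hx' => simp only [map_add, mul_add, hx, hx']
      | tmul b g =>
        rw [smashMul_tmul, smashCounit_tmul, smashCounit_tmul, smashCounit_tmul, emB, emH]
        ring
    · rw [smashCounit_tmul, euB, euH, mul_one]
  · rintro ⟨-, ⟨-, -, hco, hl, hr⟩, hm, hu, -, -⟩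
    have h3 : ∀ z, TensorProduct.lid k B
      (map εH (LinearMap.id : B →ₗ[k] B) (φ z)) = smq k εH z := by
      refine tens_ext k (f := (TensorProduct.lid k B).toLinearMap ∘ₗ
        map εH (LinearMap.id : B →ₗ[k] B) ∘ₗ φ) ?_
      intro b h
      have := bwd_M3 αB ΔB εB αH ΔH εH φ cB cH hl (αB.symm b) (αH.symm h)
      rwa [LinearEquiv.apply_symm_apply, LinearEquiv.apply_symm_apply] at this
    have h4 : ∀ z, TensorProduct.rid k H
      (map (LinearMap.id : H →ₗ[k] H) εB (φ z)) = smp k εB z := by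
      refine tens_ext k (f := (TensorProduct.rid k H).toLinearMap ∘ₗ
        map (LinearMap.id : H →ₗ[k] H) εB ∘ₗ φ) ?_
      intro b h
      have := bwd_M4 αB ΔB εB αH ΔH εH φ cB cH hr (αB.symm b) (αH.symm h)
      rwa [LinearEquiv.apply_symm_apply, LinearEquiv.apply_symm_apply] at this
    refine ⟨⟨hnat, ?_, ?_, LinearMap.ext h3, LinearMap.ext h4⟩, ?_, ?_⟩
    · refine TensorProduct.ext' fun b h => ?_
      have := bwd_M1 αB ΔB εB αH ΔH εH φ cB cH hn h3 hco (αB.symm b) (αH.symm h)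
      rwa [LinearEquiv.apply_symm_apply, LinearEquiv.apply_symm_apply] at this
    · refine TensorProduct.ext' fun b h => ?_
      have := bwd_M2 αB ΔB εB αH ΔH εH φ cB cH hn h4 hco (αB.symm b) (αH.symm h)
      rwa [LinearEquiv.apply_symm_apply, LinearEquiv.apply_symm_apply] at this
    · refine ext_fourfold' fun a h b g => ?_
      have := congrArg (map (smp k εB) (smq k εH))
        (hm (αB.symm a ⊗ₜ[k] αH.symm h) (αB.symm b ⊗ₜ[k] αH.symm g))
      rw [bwd_mul εB εH μB μH emB emH, smashMul_tmul, bwd_pq αB ΔB εB αH ΔH εH φ cB cH,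
        bwd_pq αB ΔB εB αH ΔH εH φ cB cH, bwd_pq αB ΔB εB αH ΔH εH φ cB cH, aB.1, aH.1] at this
      simp only [LinearEquiv.apply_symm_apply] at this
      simp [this]
    · have := congrArg (map (smp k εB) (smq k εH)) hu
      rw [bwd_pq αB ΔB εB αH ΔH εH φ cB cH, aB.2.2.1, aH.2.2.1] at this
      simpa [euB, euH] using this
end
end
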